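/- Let H be a real Hilbert space, d ≥ 1 an integer, C ⊆ H a nonempty closed convex set with ‖x − y‖ ≤ d for all x, y ∈ C, T : C → C nonexpansive with Fix(T) ≠ ∅, and G : C → C a τ-contraction (0 ≤ τ < 1). Let ε ∈ (0,1], t ∈ [0,1], Δ : C × (C → (0,1]) → (0,1], V : C × (C → (0,1]) → C, and let f : ℕ⁺ → ℕ⁺ majorize Δ, i.e. for every k ∈ ℕ⁺ and every φ' : C → (0,1] with 1/k ≤ φ'(v) for all v ∈ C one has 1/f(k) ≤ Δ(v, φ') for all v ∈ C. Then there exist u ∈ C and φ : C → (0,1] such that: (a) ‖u − T(u)‖ < Δ(u, φ); (b) if ‖T(V(u,φ)) − V(u,φ)‖ < φ(V(u,φ)) then ‖G(u) − u‖² < ‖G(u) − ((1−t)·u + t·V(u,φ))‖² + ε; and (c) 1/K ≤ φ(v) for all v ∈ C, where K := k_{i₀} is defined by: ε̃ := ((1−τ)²/(6+8d))·ε, n_ε̃ := ⌈8d⁴/ε̃⁴⌉, i₀ := the least integer i ≥ 0 with τ^{i+1} ≤ ε̃/(6d²), f̃(n) := max{f^M(16d·n²), 16d·n²} where f^M(n)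 := max{f(i) : 1 ≤ i ≤ n}, f_i(k) := f̃^{(n_ε̃^i)}(k) (the n_ε̃^i-fold iterate of f̃), f̃_i(n) := max{f_i^M(16d·n²), 16d·n²}, k₀ := f̃₀^{(n_ε̃)}(1) and k_{i+1} := f̃_i^{(n_ε̃)}(k_i). -/

import Mathlib

open scoped RealInnerProductSpace

/-- `fM f n = max {f i : 1 ≤ i ≤ n}`. -/
def fM (f : ℕ → ℕ) (n : ℕ) : ℕ := (Finset.Icc 1 n).sup f

/-- `ftilde d f n = max {fᴹ(16·d·n²), 16·d·n²}`. -/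
def ftilde (d : ℕ) (f : ℕ → ℕ) (n : ℕ) : ℕ := max (fM f (16 * d * n ^ 2)) (16 * d * n ^ 2)

/-- `fIt d nε f i = f̃^(nε^i)`, the `nε^i`-fold iterate of `f̃`. -/
def fIt (d nε : ℕ) (f : ℕ → ℕ) (i : ℕ) (k : ℕ) : ℕ := (ftilde d f)^[nε ^ i] k

/-- `ftildeI d nε f i n = max {fᵢᴹ(16·d·n²), 16·d·n²}`. -/
def ftildeI (d nε : ℕ) (f : ℕ → ℕ) (i : ℕ) (n : ℕ) : ℕ :=
  max (fM (fIt d nε f i) (16 * d * n ^ 2)) (16 * d * n ^ 2)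

/-- The recursively defined sequence `k₀ := f̃₀^(nε)(1)`, `k_{i+1} := f̃ᵢ^(nε)(kᵢ)`. -/
def kSeq (d nε : ℕ) (f : ℕ → ℕ) : ℕ → ℕ
  | 0 => (ftildeI d nε f 0)^[nε] 1
  | (i + 1) => (ftildeI d nε f i)^[nε] (kSeq d nε f i)

/-- `Kdef d τ ε̃ f = k_{i₀}` where `n_ε̃ := ⌈8d⁴/ε̃⁴⌉` and `i₀` is the least `i`
with `τ^(i+1) ≤ ε̃/(6d²)`. -/
noncomputable def Kdef (d : ℕ) (τ εt : ℝ) (f : ℕ → ℕ) : ℕ :=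
  kSeq d ⌈8 * (d : ℝ) ^ 4 / εt ^ 4⌉₊ f
    (sInf {i : ℕ | τ ^ (i + 1) ≤ εt / (6 * (d : ℝ) ^ 2)})

lemma id_le_ftilde (d : ℕ) (f : ℕ → ℕ) (hd : 1 ≤ d) (k : ℕ) : k ≤ ftilde d f k := by
  refine le_trans ?_ (le_max_right _ _)
  nlinarith [Nat.zero_le (d * k ^ 2), Nat.le_self_pow (two_ne_zero) k,
    Nat.mul_le_mul_right (k ^ 2) hd]

lemma le_iter (d : ℕ) (f : ℕ → ℕ) (hd : 1 ≤ d) (m : ℕ) : m ≤ (ftilde d f)^[m] 1 := by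
  suffices h : m + 1 ≤ (ftilde d f)^[m] 1 by omega
  induction m with
  | zero => simp
  | succ m ih =>
    rw [Function.iterate_succ_apply']
    set k := (ftilde d f)^[m] 1
    refine le_trans ?_ (le_max_right _ _)
    nlinarith [Nat.zero_le (d * k ^ 2), Nat.le_self_pow (two_ne_zero) k,
      Nat.mul_le_mul_right (k ^ 2) hd]

lemma fM_mono (f : ℕ → ℕ) : Monotone (fM f) := fun a b h =>
  Finset.sup_mono (Finset.Icc_subset_Icc le_rfl h)

lemma ftilde_mono (d : ℕ) (f : ℕ → ℕ) : Monotone (ftilde d f) := fun a b h => by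
  have h1 : 16 * d * a ^ 2 ≤ 16 * d * b ^ 2 := by gcongr
  exact max_le_max (fM_mono f h1) h1

lemma iter_zero (d : ℕ) (f : ℕ → ℕ) (j : ℕ) : (ftilde d f)^[j] 0 = 0 := by
  apply Function.iterate_fixed
  simp [ftilde, fM]

lemma fIt_le_ftildeI (d n : ℕ) (f : ℕ → ℕ) (hd : 1 ≤ d) (i k : ℕ) :
    (ftilde d f)^[n ^ i] k ≤ ftildeI d n f i k := by
  rcases Nat.eq_zero_or_pos k with rfl | hk
  · rw [iter_zero]; exact Nat.zero_le _
  · refine le_trans ?_ (le_max_left _ _)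
    have h1 : 1 ≤ 16 * d * k ^ 2 := by
      have : 0 < 16 * d * k ^ 2 := by positivity
      exact this
    have h2 : k ≤ 16 * d * k ^ 2 := by
      nlinarith [Nat.zero_le (d * k ^ 2), Nat.le_self_pow (two_ne_zero) k,
        Nat.mul_le_mul_right (k ^ 2) hd]
    have h3 : fIt d n f i (16 * d * k ^ 2) ≤ fM (fIt d n f i) (16 * d * k ^ 2) :=
      Finset.le_sup (f := fIt d n f i) (Finset.mem_Icc.2 ⟨h1, le_rfl⟩)
    exact ((ftilde_mono d f).iterate _ h2).trans h3

lemma iter_le_iterI (d n : ℕ) (f : ℕ → ℕ) (hd : 1 ≤ d) (i k : ℕ) :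
    (ftilde d f)^[n ^ (i + 1)] k ≤ (ftildeI d n f i)^[n] k := by
  rw [pow_succ, Function.iterate_mul]
  exact ((ftilde_mono d f).iterate _).iterate_le_of_le (fun k => fIt_le_ftildeI d n f hd i k) n k

lemma kSeq_ge (d n m : ℕ) (f : ℕ → ℕ) (hd : 1 ≤ d) (hm : 1 ≤ m) (hmn : 2 * m ^ 2 ≤ n) (i : ℕ) :
    (ftilde d f)^[m + m ^ (i + 1)] 1 ≤ kSeq d n f i := by
  have hmono : ∀ a b, a ≤ b → (ftilde d f)^[a] 1 ≤ (ftilde d f)^[b] 1 := fun a b h =>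
    Function.monotone_iterate_of_id_le (fun k => id_le_ftilde d f hd k) h 1
  induction i with
  | zero =>
    refine le_trans ?_ (iter_le_iterI d n f hd 0 1)
    apply hmono
    simp only [zero_add, pow_one]
    nlinarith
  | succ i ih =>
    refine le_trans ?_ (iter_le_iterI d n f hd i _)
    refine le_trans ?_ ((ftilde_mono d f).iterate _ ih)
    rw [← Function.iterate_add_apply]
    apply hmono
    have h1 : m ^ (i + 1 + 1) ≤ (m ^ 2) ^ (i + 1) := by
      rw [← pow_mul]
      exact Nat.pow_le_pow_right hm (by omega)
    have h2 : (m ^ 2) ^ (i + 1) ≤ n ^ (i + 1) := Nat.pow_le_pow_left (by nlinarith) _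
    omega

lemma exists_fix {H : Type*} [NormedAddCommGroup H] [InnerProductSpace ℝ H] [CompleteSpace H]
    (C : Set H) (hne : C.Nonempty) (hcl : IsClosed C) (hcv : Convex ℝ C)
    (T : C → C) (hT : ∀ x y : C, ‖(T x : H) - (T y : H)‖ ≤ ‖(x : H) - (y : H)‖)
    (s : ℝ) (hs0 : 0 < s) (hs1 : s ≤ 1) (τ : ℝ) (hτ0 : 0 ≤ τ) (hτ1 : τ < 1)
    (G : C → C) (hG : ∀ x y : C, ‖(G x : H) - (G y : H)‖ ≤ τ * ‖(x : H) - (y : H)‖) :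
    ∃ y : C, (y : H) = s • (G y : H) + (1 - s) • (T y : H) := by
  let F : C → C := fun y => ⟨s • (G y : H) + (1 - s) • (T y : H),
    hcv (G y).2 (T y).2 hs0.le (by linarith) (by ring)⟩
  have h0 : 0 ≤ s * τ + (1 - s) := by nlinarith [mul_nonneg hs0.le hτ0]
  have h1 : s * τ + (1 - s) < 1 := by nlinarith
  have : CompleteSpace C := hcl.completeSpace_coe
  have : Nonempty C := hne.to_subtype
  have hF : ContractingWith ⟨s * τ + (1 - s), h0⟩ F := by
    refine ⟨by exact_mod_cast h1, LipschitzWith.of_dist_le_mul fun x y => ?_⟩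
    rw [Subtype.dist_eq, Subtype.dist_eq, dist_eq_norm, dist_eq_norm]
    change ‖(s • (G x : H) + (1 - s) • (T x : H)) - (s • (G y : H) + (1 - s) • (T y : H))‖
      ≤ (s * τ + (1 - s)) * ‖(x : H) - y‖
    have e1 : (s • (G x : H) + (1 - s) • (T x : H)) - (s • (G y : H) + (1 - s) • (T y : H)) =
      s • ((G x : H) - G y) + (1 - s) • ((T x : H) - T y) := by module
    rw [e1]
    refine (norm_add_le _ _).trans ?_
    rw [norm_smul, norm_smul, Real.norm_of_nonneg hs0.le, Real.norm_of_nonneg (by linarith)]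
    have a1 := mul_le_mul_of_nonneg_left (hG x y) hs0.le
    have a2 := mul_le_mul_of_nonneg_left (hT x y) (by linarith : 0 ≤ 1 - s)
    linarith
  refine ⟨ContractingWith.fixedPoint F hF, ?_⟩
  have := hF.fixedPoint_isFixedPt
  exact (congrArg Subtype.val this).symm

lemma res_nonexp {H : Type*} [NormedAddCommGroup H] [InnerProductSpace ℝ H]
    (C : Set H) (T : C → C) (hT : ∀ x y : C, ‖(T x : H) - (T y : H)‖ ≤ ‖(x : H) - (y : H)‖)
    (s : ℝ) (hs0 : 0 < s) (hs1 : s ≤ 1) (w w' y y' : C)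
    (h : (y : H) = s • (w : H) + (1 - s) • (T y : H))
    (h' : (y' : H) = s • (w' : H) + (1 - s) • (T y' : H)) :
    ‖(y : H) - y'‖ ≤ ‖(w : H) - w'‖ := by
  have e1 : (y : H) - y' = s • ((w : H) - w') + (1 - s) • ((T y : H) - T y') := by
    nth_rewrite 1 [h, h']; module
  have e2 : ‖(y : H) - y'‖ ≤ s * ‖(w : H) - w'‖ + (1 - s) * ‖(T y : H) - T y'‖ := by
    nth_rewrite 1 [e1]
    refine (norm_add_le _ _).trans ?_
    rw [norm_smul, norm_smul, Real.norm_of_nonneg hs0.le, Real.norm_of_nonneg (by linarith)]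
  have a2 := mul_le_mul_of_nonneg_left (hT y y') (by linarith : 0 ≤ 1 - s)
  refine le_of_mul_le_mul_left ?_ hs0
  linarith

lemma mono_inner {H : Type*} [NormedAddCommGroup H] [InnerProductSpace ℝ H]
    (C : Set H) (T : C → C) (hT : ∀ x y : C, ‖(T x : H) - (T y : H)‖ ≤ ‖(x : H) - (y : H)‖)
    (x y : C) :
    0 ≤ inner ℝ (((x : H) - T x) - ((y : H) - T y)) ((x : H) - y) := by
  have e : ((x : H) - T x) - ((y : H) - T y) = ((x : H) - y) - ((T x : H) - T y) := by abel
  rw [e, inner_sub_left, real_inner_self_eq_norm_sq]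
  have h1 := real_inner_le_norm ((T x : H) - T y) ((x : H) - y)
  have h2 := mul_le_mul_of_nonneg_right (hT x y) (norm_nonneg ((x : H) - y))
  nlinarith

lemma res_mono {H : Type*} [NormedAddCommGroup H] [InnerProductSpace ℝ H]
    (C : Set H) (T : C → C) (hT : ∀ x y : C, ‖(T x : H) - (T y : H)‖ ≤ ‖(x : H) - (y : H)‖)
    (s s' : ℝ) (hs0 : 0 < s) (hs0' : 0 < s') (hss : s' ≤ s) (hs1 : s < 1) (hs1' : s' < 1)
    (w y y' : C)
    (h : (y : H) = s • (w : H) + (1 - s) • (T y : H))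
    (h' : (y' : H) = s' • (w : H) + (1 - s') • (T y' : H)) :
    ‖(y' : H) - y‖ ^ 2 ≤ ‖(w : H) - y'‖ ^ 2 - ‖(w : H) - y‖ ^ 2 := by
  have h0 := mono_inner C T hT y y'
  set σ : ℝ := s / (1 - s) with hσ
  set σ' : ℝ := s' / (1 - s') with hσ'
  have p1 : 0 < 1 - s := by linarith
  have p2 : 0 < 1 - s' := by linarith
  have q1 : 0 < σ := by positivity
  have q2 : 0 < σ' := by positivity
  have q3 : σ' ≤ σ := by
    rw [hσ, hσ', div_le_div_iff₀ p2 p1]; nlinarith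
  have key : ∀ (r : ℝ) (z : C), 0 < 1 - r → (z : H) = r • (w : H) + (1 - r) • (T z : H) →
      (z : H) - T z = (r / (1 - r)) • ((w : H) - z) := by
    intro r z hr hz
    have a : (1 - r) • ((z : H) - T z) = r • ((w : H) - z) := by
      have b : (1 - r) • (T z : H) = z - r • (w : H) := by
        rw [eq_sub_iff_add_eq, add_comm]; exact hz.symm
      rw [smul_sub, b]; module
    rw [div_eq_inv_mul, mul_smul, ← a, smul_smul, inv_mul_cancel₀ hr.ne', one_smul]
  rw [key s y p1 h, key s' y' p2 h', ← hσ, ← hσ'] at h0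
  set p : H := (w : H) - y with hp
  set q : H := (w : H) - y' with hq
  have e1 : (y : H) - y' = q - p := by rw [hp, hq]; abel
  have e2 : (y' : H) - y = p - q := by rw [hp, hq]; abel
  rw [e1] at h0
  rw [e2, norm_sub_sq_real]
  simp only [inner_sub_left, inner_sub_right, real_inner_smul_left,
    real_inner_self_eq_norm_sq, real_inner_comm p q] at h0
  have e3 : inner ℝ q p = inner ℝ p q := real_inner_comm _ _
  try rw [e3] at h0
  have h3 : 0 ≤ ‖p - q‖ ^ 2 := sq_nonneg _
  rw [norm_sub_sq_real] at h3
  set a := ‖p‖ ^ 2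
  set b := ‖q‖ ^ 2
  set z := inner ℝ p q
  have h4 : (σ + σ') * (a - 2 * z + b) ≤ (σ - σ') * (b - a) := by linarith
  rcases eq_or_lt_of_le q3 with hh | hh
  · rw [hh] at h4
    have h5 : a - 2 * z + b ≤ 0 := by
      by_contra hc
      push Not at hc
      have := mul_pos (add_pos q1 q1) hc
      linarith
    -- here p = q
    have h7 : ‖p - q‖ ^ 2 = 0 := by
      rw [norm_sub_sq_real]; exact le_antisymm h5 h3
    have h8 : p = q := by
      have : ‖p - q‖ = 0 := by simpa using h7
      exact sub_eq_zero.1 (norm_eq_zero.1 this)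
    have h9 : a = b := by simp only [a, b, h8]
    linarith
  · have h5 : 0 ≤ (σ + σ') * (a - 2 * z + b) := by positivity
    have h6 : 0 < σ - σ' := by linarith
    refine le_of_mul_le_mul_left ?_ h6
    nlinarith

lemma res_vip {H : Type*} [NormedAddCommGroup H] [InnerProductSpace ℝ H]
    (C : Set H) (d : ℕ) (hbd : ∀ x ∈ C, ∀ y ∈ C, ‖x - y‖ ≤ (d : ℝ))
    (T : C → C) (hT : ∀ x y : C, ‖(T x : H) - (T y : H)‖ ≤ ‖(x : H) - (y : H)‖)
    (s : ℝ) (hs0 : 0 ≤ s) (hs1 : s ≤ 1) (w x v : C)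
    (h : (x : H) = s • (w : H) + (1 - s) • (T x : H)) :
    s * inner ℝ ((w : H) - x) ((v : H) - x) ≤ ‖(T v : H) - v‖ * d := by
  have h0 := mono_inner C T hT v x
  have a : (1 - s) • ((x : H) - T x) = s • ((w : H) - x) := by
    have b : (1 - s) • (T x : H) = x - s • (w : H) := by
      rw [eq_sub_iff_add_eq, add_comm]; exact h.symm
    rw [smul_sub, b]; module
  rw [← real_inner_smul_left, ← a, real_inner_smul_left]
  rw [inner_sub_left] at h0
  have h1 : inner ℝ ((v : H) - T v) ((v : H) - x) ≤ ‖(T v : H) - v‖ * d := by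
    refine (real_inner_le_norm _ _).trans ?_
    rw [norm_sub_rev (v : H) (T v)]
    gcongr
    exact hbd _ v.2 _ x.2
  have h2 : 0 ≤ ‖(T v : H) - v‖ * d := by positivity
  have h3 : 0 ≤ 1 - s := by linarith
  calc (1 - s) * inner ℝ ((x : H) - T x) ((v : H) - x) ≤ (1 - s) * (‖(T v : H) - v‖ * d) := by
        gcongr; linarith
    _ ≤ _ := by nlinarith

lemma split_lemma (r : ℕ → ℝ) (D : ℝ) (h0 : ∀ j, 0 ≤ r j) (hD : ∀ j, r j ≤ D) (m M j : ℕ)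
    (hm : 1 ≤ m) : ∃ b, b < m ∧ r (j + (b + 1) * M) - r (j + b * M) ≤ D / m := by
  by_contra hc
  push Not at hc
  have h1 : ∑ b ∈ Finset.range m, (r (j + (b + 1) * M) - r (j + b * M)) = r (j + m * M) - r (j + 0 * M) :=
    Finset.sum_range_sub (fun b => r (j + b * M)) m
  have h2 : ∑ _b ∈ Finset.range m, D / m < ∑ b ∈ Finset.range m, (r (j + (b + 1) * M) - r (j + b * M)) := by
    apply Finset.sum_lt_sum_of_nonempty
    · exact Finset.nonempty_range_iff.2 (by omega)
    · intro b hb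
      exact hc b (Finset.mem_range.1 hb)
  have hm0 : (m : ℝ) ≠ 0 := by
    have : m ≠ 0 := by omega
    exact_mod_cast this
  rw [h1, Finset.sum_const, Finset.card_range, nsmul_eq_mul, mul_div_cancel₀ _ hm0] at h2
  have := h0 (j + 0 * M)
  have := hD (j + m * M)
  linarith

lemma chain_lemma {H : Type*} [NormedAddCommGroup H] [InnerProductSpace ℝ H]
    (C : Set H) (d : ℕ) (hbd : ∀ x ∈ C, ∀ y ∈ C, ‖x - y‖ ≤ (d : ℝ))
    (τ : ℝ) (hτ0 : 0 ≤ τ) (hτ1 : τ < 1)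
    (G : C → C) (hG : ∀ x y : C, ‖(G x : H) - (G y : H)‖ ≤ τ * ‖(x : H) - (y : H)‖)
    (U : ℕ → C → C) (X : ℕ → C) (e : ℝ) (he : 0 ≤ e) (m : ℕ) (hm : 1 ≤ m)
    (hvar : (d : ℝ) ^ 2 / m ≤ e ^ 2)
    (hXU : ∀ j w, ‖(X j : H) - U j w‖ ≤ ‖(G (X j) : H) - w‖)
    (hU : ∀ (w : C) i j, i ≤ j →
      ‖(U j w : H) - U i w‖ ^ 2 ≤ ‖(w : H) - U j w‖ ^ 2 - ‖(w : H) - U i w‖ ^ 2)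
    (c0 : C) (i : ℕ) : ∀ l j0 : ℕ, ∃ (c : C) (j : ℕ), j0 ≤ j ∧ j + m ^ l ≤ j0 + m ^ (l + i) ∧
      ∀ s, j ≤ s → s ≤ j + m ^ l → ‖(X s : H) - c‖ ≤ τ ^ i * d + e / (1 - τ) := by
  have h1τ : 0 < 1 - τ := by linarith
  induction i with
  | zero =>
    intro l j0
    refine ⟨c0, j0, le_rfl, le_rfl, fun s _ _ => ?_⟩
    have := hbd _ (X s).2 _ c0.2
    have : 0 ≤ e / (1 - τ) := by positivity
    simp only [pow_zero]
    linarith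
  | succ i ih =>
    intro l j0
    obtain ⟨c, j, hj0, hj1, hc⟩ := ih (l + 1) j0
    set r : ℕ → ℝ := fun s => ‖(G c : H) - U s (G c)‖ ^ 2 with hr
    obtain ⟨b, hb, hbr⟩ := split_lemma r ((d : ℝ) ^ 2) (fun s => sq_nonneg _) (fun s => by
      have := hbd _ (G c).2 _ (U s (G c)).2
      simp only [hr]; gcongr) m (m ^ l) j hm
    have hbm : (b + 1) * m ^ l ≤ m ^ (l + 1) := by
      rw [pow_succ, mul_comm (m ^ l)]
      exact Nat.mul_le_mul_right _ hb
    have hsplit : (b + 1) * m ^ l = b * m ^ l + m ^ l := by ring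
    refine ⟨U (j + b * m ^ l) (G c), j + b * m ^ l, by omega, ?_, ?_⟩
    · have : l + 1 + i = l + (i + 1) := by ring
      rw [this] at hj1
      omega
    · intro s hs1 hs2
      have k1 := hc s (by omega) (by omega)
      have k2 := hU (G c) _ _ hs1
      have k3 := hU (G c) s (j + (b + 1) * m ^ l) (by omega)
      have k4 : ‖(U s (G c) : H) - U (j + b * m ^ l) (G c)‖ ^ 2 ≤ e ^ 2 := by
        have := sq_nonneg ‖(U (j + (b + 1) * m ^ l) (G c) : H) - U s (G c)‖
        simp only [hr] at hbr
        linarith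
      have k5 : ‖(U s (G c) : H) - U (j + b * m ^ l) (G c)‖ ≤ e := le_of_abs_le (abs_le_of_sq_le_sq k4 he)
      have k6 := (hXU s (G c)).trans (hG (X s) c)
      have k7 := norm_sub_le_norm_sub_add_norm_sub (X s : H) (U s (G c)) (U (j + b * m ^ l) (G c))
      have k8 := mul_le_mul_of_nonneg_left k1 hτ0
      have k9 : τ * (e / (1 - τ)) + e = e / (1 - τ) := by field_simp; ring
      rw [pow_succ]
      linarith

set_option maxHeartbeats 2000000 in
/-- Quantitative solution to the variational inequality problem (solution of
Problem 1), together with a majorant for the solution functional `φ`. -/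
theorem quantitative_vip_solution
    {H : Type*} [NormedAddCommGroup H] [InnerProductSpace ℝ H] [CompleteSpace H]
    (d : ℕ) (hd : 1 ≤ d)
    (C : Set H) (hne : C.Nonempty) (hcl : IsClosed C) (hcv : Convex ℝ C)
    (hbd : ∀ x ∈ C, ∀ y ∈ C, ‖x - y‖ ≤ (d : ℝ))
    (T : C → C) (hT : ∀ x y : C, ‖(T x : H) - (T y : H)‖ ≤ ‖(x : H) - (y : H)‖)
    (hfix : ∃ p : C, T p = p)
    (τ : ℝ) (hτ0 : 0 ≤ τ) (hτ1 : τ < 1)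
    (G : C → C) (hG : ∀ x y : C, ‖(G x : H) - (G y : H)‖ ≤ τ * ‖(x : H) - (y : H)‖)
    (ε : ℝ) (hε : ε ∈ Set.Ioc (0 : ℝ) 1) (t : ℝ) (ht : t ∈ Set.Icc (0 : ℝ) 1)
    (Δ : C → (C → Set.Ioc (0 : ℝ) 1) → Set.Ioc (0 : ℝ) 1)
    (V : C → (C → Set.Ioc (0 : ℝ) 1) → C)
    (f : ℕ → ℕ) (hf : ∀ k, 1 ≤ k → 1 ≤ f k)
    (hmaj : ∀ k : ℕ, 1 ≤ k → ∀ φ' : C → Set.Ioc (0 : ℝ) 1,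
      (∀ v : C, (1 : ℝ) / k ≤ (φ' v : ℝ)) → ∀ v : C, (1 : ℝ) / (f k) ≤ (Δ v φ' : ℝ)) :
    ∃ (u : C) (φ : C → Set.Ioc (0 : ℝ) 1),
      ‖(u : H) - (T u : H)‖ < (Δ u φ : ℝ) ∧
      (‖(T (V u φ) : H) - (V u φ : H)‖ < (φ (V u φ) : ℝ) →
        ‖(G u : H) - (u : H)‖ ^ 2 <
          ‖(G u : H) - ((1 - t) • (u : H) + t • (V u φ : H))‖ ^ 2 + ε) ∧
      (∀ v : C,
        (1 : ℝ) / (Kdef d τ ((1 - τ) ^ 2 / (6 + 8 * (d : ℝ)) * ε) f) ≤ (φ v : ℝ)) := by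
  obtain ⟨hε0, hε1⟩ := hε
  obtain ⟨ht0, ht1⟩ := ht
  have hdR : (1 : ℝ) ≤ d := by exact_mod_cast hd
  set e : ℝ := (1 - τ) ^ 2 / (6 + 8 * (d : ℝ)) * ε with he
  have h1τ : 0 < 1 - τ := by linarith
  have he0 : 0 < e := by positivity
  have heq : e * (6 + 8 * (d : ℝ)) = (1 - τ) ^ 2 * ε := by
    rw [he]; field_simp
  have heε : e * (6 + 8 * (d : ℝ)) ≤ ε := by
    rw [heq]
    have : (1 - τ) ^ 2 ≤ 1 := by nlinarith
    nlinarith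
  have he14 : e * 14 ≤ ε := by nlinarith
  have he1 : e ≤ 1 := by linarith
  set n : ℕ := ⌈8 * (d : ℝ) ^ 4 / e ^ 4⌉₊ with hn
  set i0 : ℕ := sInf {i : ℕ | τ ^ (i + 1) ≤ e / (6 * (d : ℝ) ^ 2)} with hi0
  have hi0m : τ ^ (i0 + 1) ≤ e / (6 * (d : ℝ) ^ 2) := by
    have hne' : {i : ℕ | τ ^ (i + 1) ≤ e / (6 * (d : ℝ) ^ 2)}.Nonempty := by
      have hpos : 0 < e / (6 * (d : ℝ) ^ 2) := by positivity
      obtain ⟨N, hN⟩ := exists_pow_lt_of_lt_one hpos hτ1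
      refine ⟨N, ?_⟩
      have : τ ^ (N + 1) ≤ τ ^ N := pow_le_pow_of_le_one hτ0 hτ1.le (Nat.le_succ N)
      exact this.trans hN.le
    exact Nat.sInf_mem hne'
  have hKd : Kdef d τ e f = kSeq d n f i0 := rfl
  rw [hKd]
  set m : ℕ := ⌈(d : ℝ) ^ 2 / e ^ 2⌉₊ with hm
  have hq1 : 1 ≤ (d : ℝ) ^ 2 / e ^ 2 := by
    rw [le_div_iff₀ (by positivity)]
    nlinarith
  have hmle : (d : ℝ) ^ 2 / e ^ 2 ≤ m := Nat.le_ceil _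
  have hm1 : 1 ≤ m := by
    have : (1 : ℝ) ≤ m := hq1.trans hmle
    exact_mod_cast this
  have hmn : 2 * m ^ 2 ≤ n := by
    have h1 : (m : ℝ) < (d : ℝ) ^ 2 / e ^ 2 + 1 := Nat.ceil_lt_add_one (by positivity)
    have h2 : (m : ℝ) ≤ 2 * ((d : ℝ) ^ 2 / e ^ 2) := by linarith
    have h3 : 8 * (d : ℝ) ^ 4 / e ^ 4 ≤ n := Nat.le_ceil _
    have h4 : 8 * (d : ℝ) ^ 4 / e ^ 4 = 2 * (2 * ((d : ℝ) ^ 2 / e ^ 2)) ^ 2 := by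
      field_simp; ring
    have h5 : (2 * (m : ℝ) ^ 2) ≤ n := by
      rw [h4] at h3
      have : (m : ℝ) ^ 2 ≤ (2 * ((d : ℝ) ^ 2 / e ^ 2)) ^ 2 := by gcongr
      linarith
    exact_mod_cast h5
  have hK := kSeq_ge d n m f hd hm1 hmn i0
  -- the chain
  set p : ℕ → ℕ := fun j => (ftilde d f)^[j] ((ftilde d f)^[m] 1) with hp
  have hps : ∀ j, p (j + 1) = ftilde d f (p j) := fun j => by
    simp only [hp, Function.iterate_succ_apply']
  have hp0 : m ≤ p 0 := le_iter d f hd m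
  have hpm : Monotone p := monotone_nat_of_le_succ (fun j => by
    rw [hps]; exact id_le_ftilde d f hd _)
  have hpN : p (m ^ (i0 + 1)) ≤ kSeq d n f i0 := by
    simp only [hp, ← Function.iterate_add_apply]
    rwa [add_comm]
  have hpj : ∀ j, m ≤ p j := fun j => hp0.trans (hpm (Nat.zero_le j))
  have hpjR : ∀ j, (m : ℝ) ≤ p j := fun j => by exact_mod_cast hpj j
  have hpj1 : ∀ j, (1 : ℝ) ≤ p j := fun j => by exact_mod_cast hm1.trans (hpj j)
  set s : ℕ → ℝ := fun j => 1 / (2 * d * p j) with hs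
  have hs0 : ∀ j, 0 < s j := fun j => by
    have := hpj1 j
    simp only [hs]; positivity
  have hs1 : ∀ j, s j < 1 := fun j => by
    have := hpj1 j
    simp only [hs]
    rw [div_lt_one (by positivity)]
    nlinarith
  have hsm : ∀ i j, i ≤ j → s j ≤ s i := fun i j hij => by
    have h1 := hpj1 i
    have h2 : (p i : ℝ) ≤ p j := by exact_mod_cast hpm hij
    simp only [hs]
    gcongr
  have hU : ∀ j (w : C), ∃ y : C, (y : H) = s j • (w : H) + (1 - s j) • (T y : H) := fun j w =>
    exists_fix C hne hcl hcv T hT (s j) (hs0 j) (hs1 j).le 0 le_rfl one_pos (fun _ => w)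
      (fun x y => by simp)
  choose U hUe using hU
  have hX : ∀ j, ∃ y : C, (y : H) = s j • (G y : H) + (1 - s j) • (T y : H) := fun j =>
    exists_fix C hne hcl hcv T hT (s j) (hs0 j) (hs1 j).le τ hτ0 hτ1 G hG
  choose X hXe using hX
  obtain ⟨c0, hc0⟩ := hne
  have hvar : (d : ℝ) ^ 2 / m ≤ e ^ 2 := by
    have hm0 : (0 : ℝ) < m := by exact_mod_cast hm1
    rw [div_le_iff₀ hm0]
    rw [div_le_iff₀ (by positivity)] at hmle
    linarith
  obtain ⟨c, j, -, hjN, hjc⟩ := chain_lemma C d hbd τ hτ0 hτ1 G hG U X e he0.le m hm1 hvar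
    (fun j w => res_nonexp C T hT (s j) (hs0 j) (hs1 j).le _ _ _ _ (hXe j) (hUe j w))
    (fun w i j hij => res_mono C T hT (s i) (s j) (hs0 i) (hs0 j) (hsm i j hij) (hs1 i)
      (hs1 j) w _ _ (hUe i w) (hUe j w)) ⟨c0, hc0⟩ (i0 + 1) 0 0
  simp only [pow_zero, zero_add] at hjN hjc
  have hjx := hjc j le_rfl (Nat.le_succ j)
  have hju := hjc (j + 1) (Nat.le_succ j) le_rfl
  set x := X j with hx
  set u := X (j + 1) with hu
  set A : ℝ := τ ^ (i0 + 1) * d + e / (1 - τ) with hA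
  have hE : ‖(u : H) - x‖ ≤ 2 * A := by
    calc ‖(u : H) - x‖ = ‖((u : H) - c) - (x - c)‖ := by congr 1; abel
      _ ≤ _ := norm_sub_le _ _
      _ ≤ 2 * A := by linarith
  set k : ℕ := 16 * d * p j ^ 2 with hk
  have hpjn : 1 ≤ p j := hm1.trans (hpj j)
  have hk1 : 1 ≤ k := by
    have : 0 < k := by positivity
    exact this
  have hk1R : (1 : ℝ) ≤ k := by exact_mod_cast hk1
  have hfk : f k ≤ p (j + 1) := by
    rw [hps]
    refine le_trans ?_ (le_max_left _ _)
    exact Finset.le_sup (f := f) (Finset.mem_Icc.2 ⟨hk1, le_rfl⟩)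
  have hkK : k ≤ kSeq d n f i0 := by
    have : k ≤ p (j + 1) := by rw [hps]; exact le_max_right _ _
    exact this.trans ((hpm hjN).trans hpN)
  let φ : C → Set.Ioc (0 : ℝ) 1 := fun _ => ⟨1 / k, by positivity, by
    rw [div_le_one (by positivity)]; exact hk1R⟩
  refine ⟨u, φ, ?_, ?_, ?_⟩
  · have h1 := hmaj k hk1 φ (fun v => le_rfl) u
    refine lt_of_lt_of_le ?_ h1
    have h2 := hXe (j + 1)
    rw [← hu] at h2
    have h3 : (u : H) - T u = s (j + 1) • ((G u : H) - T u) := by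
      nth_rewrite 1 [h2]
      module
    rw [h3, norm_smul, Real.norm_of_nonneg (hs0 _).le]
    have h4 := hbd _ (G u).2 _ (T u).2
    have h5 : (1 : ℝ) ≤ f k := by exact_mod_cast hf k hk1
    have h6 : (f k : ℝ) ≤ p (j + 1) := by exact_mod_cast hfk
    calc s (j + 1) * ‖(G u : H) - T u‖ ≤ s (j + 1) * d := by
          have := hs0 (j + 1)
          gcongr
      _ = 1 / (2 * p (j + 1)) := by
          have := hpj1 (j + 1)
          simp only [hs]; field_simp
      _ < 1 / f k := by
          apply one_div_lt_one_div_of_lt <;> linarith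
  · set v := V u φ with hv
    intro hTv
    have hTv' : ‖(T v : H) - v‖ < 1 / (k : ℝ) := hTv
    have h1 := res_vip C d hbd T hT (s j) (hs0 j).le (hs1 j).le (G x) x v (hXe j)
    have h2 : inner ℝ ((G x : H) - x) ((v : H) - x) ≤ e / 8 := by
      have hsj := hs0 j
      have hP := hpj1 j
      have h3 : s j * inner ℝ ((G x : H) - x) ((v : H) - x) ≤ 1 / k * d := by
        refine h1.trans ?_
        gcongr
      have h4 : (1 : ℝ) / k * d = s j * (d / (8 * p j)) := by
        simp only [hs, hk]; push_cast; field_simp; ring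
      rw [h4] at h3
      have h5 := le_of_mul_le_mul_left h3 hsj
      refine h5.trans ?_
      rw [div_le_div_iff₀ (by positivity) (by norm_num)]
      have h6 := hmle.trans (hpjR j)
      rw [div_le_iff₀ (by positivity)] at h6
      have h7 : (d : ℝ) ≤ p j * e := by nlinarith
      linarith
    have h3 : inner ℝ ((G u : H) - u) ((v : H) - u) =
        inner ℝ ((G x : H) - x) ((v : H) - x) + inner ℝ (((G u : H) - G x) - (u - x)) ((v : H) - u)
          - inner ℝ ((G x : H) - x) ((u : H) - x) := by
      simp only [inner_sub_left, inner_sub_right]; ring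
    have h4 : inner ℝ (((G u : H) - G x) - (u - x)) ((v : H) - u) ≤ (1 + τ) * ‖(u : H) - x‖ * d := by
      refine (real_inner_le_norm _ _).trans ?_
      refine mul_le_mul ?_ (hbd _ v.2 _ u.2) (norm_nonneg _) (by positivity)
      refine (norm_sub_le _ _).trans ?_
      have := hG u x
      linarith
    have h5 : - inner ℝ ((G x : H) - x) ((u : H) - x) ≤ d * ‖(u : H) - x‖ := by
      have h6 := neg_le_of_abs_le (abs_real_inner_le_norm ((G x : H) - x) ((u : H) - x))
      have h7 : ‖(G x : H) - x‖ * ‖(u : H) - x‖ ≤ d * ‖(u : H) - x‖ := by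
        gcongr
        exact hbd _ (G x).2 _ x.2
      linarith
    have h6 : inner ℝ ((G u : H) - u) ((v : H) - u) < ε / 2 := by
      have h7 : inner ℝ ((G u : H) - u) ((v : H) - u) ≤ e / 8 + (2 + τ) * d * (2 * A) := by
        have : (2 + τ) * d * ‖(u : H) - x‖ ≤ (2 + τ) * d * (2 * A) := by gcongr
        rw [h3]; linarith
      refine lt_of_le_of_lt h7 ?_
      have h8 : τ ^ (i0 + 1) * d * d ≤ e / 6 := by
        rw [le_div_iff₀ (by positivity)] at hi0m
        linarith
      have h9 : (2 + τ) * d * (2 * A) = 2 * (2 + τ) * (τ ^ (i0 + 1) * d * d)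
          + 2 * (2 + τ) * d * (e / (1 - τ)) := by rw [hA]; ring
      have h10 : 2 * (2 + τ) * (τ ^ (i0 + 1) * d * d) ≤ e := by
        have h0 : 0 ≤ τ ^ (i0 + 1) * d * d := by positivity
        nlinarith
      have h11 : e / (1 - τ) * (6 + 8 * d) = (1 - τ) * ε := by
        rw [div_mul_eq_mul_div, heq]; field_simp
      have h12 : (2 * (2 + τ) * d * (e / (1 - τ))) * (6 + 8 * d) ≤ 4 * d * ε := by
        have : (2 * (2 + τ) * d * (e / (1 - τ))) * (6 + 8 * d) =
          2 * d * ε * ((2 + τ) * (1 - τ)) := by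
            calc _ = 2 * (2 + τ) * d * (e / (1 - τ) * (6 + 8 * d)) := by ring
              _ = _ := by rw [h11]; ring
        rw [this]
        have h13 : (2 + τ) * (1 - τ) ≤ 2 := by nlinarith
        have h14 : 0 ≤ 2 * d * ε := by positivity
        have h16 := mul_le_mul_of_nonneg_left h13 h14
        linarith only [h16]
      rw [h9]
      have h15 : (0 : ℝ) < 6 + 8 * d := by positivity
      refine lt_of_mul_lt_mul_right (a := 6 + 8 * (d : ℝ)) ?_ h15.le
      nlinarith
    have h7 : (G u : H) - ((1 - t) • (u : H) + t • (v : H)) = (G u - u) - t • ((v : H) - u) := by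
      module
    rw [h7, norm_sub_sq_real ((G u : H) - u) (t • ((v : H) - u)), real_inner_smul_right]
    have h8 : t * inner ℝ ((G u : H) - u) ((v : H) - u) < ε / 2 := by
      rcases le_or_gt (inner ℝ ((G u : H) - u) ((v : H) - u)) 0 with h | h
      · nlinarith
      · nlinarith
    have h9 := sq_nonneg ‖t • ((v : H) - u)‖
    linarith
  · intro v
    have hkK' : (k : ℝ) ≤ (kSeq d n f i0 : ℕ) := by exact_mod_cast hkK
    change (1 : ℝ) / (kSeq d n f i0 : ℕ) ≤ 1 / (k : ℝ)
    exact one_div_le_one_div_of_le (by positivity) hkK'
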